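/- Let Γ be a group and let ρ₁, ρ₂ : Γ → PSL(2,ℝ) be group homomorphisms. Assume that the subgroup ρ₁(Γ) is non-elementary and is not discrete, and that for every γ ∈ Γ the rotation numbers of ρ₁(γ) and ρ₂(γ) coincide: rot(ρ₁(γ)) = rot(ρ₂(γ)) in ℝ/2πℤ. Then there exists g ∈ PSL(2,ℝ) such that ρ₁(γ) = g ρ₂(γ) g⁻¹ for all γ ∈ Γ. -/

import Mathlib

/-!
`PSL2R` is `PSL(2,ℝ) = SL(2,ℝ)/{±1}`, realized as the quotient of `SL(2,ℝ)` by its center.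
-/

open Matrix Real

noncomputable section

/-- `SL(2,ℝ)`. -/
abbrev SL2R := Matrix.SpecialLinearGroup (Fin 2) ℝ

/-- The topology on `SL(2,ℝ)` induced from the space of matrices. -/
instance : TopologicalSpace SL2R :=
  TopologicalSpace.induced (fun g => (g : Matrix (Fin 2) (Fin 2) ℝ)) inferInstance

/-- `PSL(2,ℝ) = SL(2,ℝ)/{±1}`, the quotient of `SL(2,ℝ)` by its center. -/
abbrev PSL2R := SL2R ⧸ Subgroup.center SL2R

/-- The rotation matrix `R(θ) = [[cos θ, sin θ], [-sin θ, cos θ]]`, as an element of `SL(2,ℝ)`. -/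
def rotMat (θ : ℝ) : SL2R :=
  ⟨!![Real.cos θ, Real.sin θ; -Real.sin θ, Real.cos θ], by
    simp [Matrix.det_fin_two_of]
    ring_nf
    nlinarith [Real.sin_sq_add_cos_sq θ]⟩

/-- The absolute value of the trace, well defined on `PSL(2,ℝ)`. -/
def absTrace (A : PSL2R) : ℝ :=
  |Matrix.trace ((Quotient.out A : SL2R) : Matrix (Fin 2) (Fin 2) ℝ)|

/-- An element of `PSL(2,ℝ)` is elliptic if `|tr| < 2`. -/
def IsElliptic (A : PSL2R) : Prop := absTrace A < 2

/-- The rotation number of an element of `PSL(2,ℝ)`, in `ℝ/2πℤ`: it is `2θ` if the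
element is conjugate to the class of `R(θ)` with `θ ∈ (0,π)` (i.e. elliptic), and `0`
otherwise (hyperbolic, parabolic, identity). -/
def rot (A : PSL2R) : AddCircle (2 * π) :=
  open Classical in
  if h : ∃ θ ∈ Set.Ioo (0:ℝ) π, IsConj (QuotientGroup.mk (rotMat θ) : PSL2R) A then
    ((2 * h.choose : ℝ) : AddCircle (2 * π))
  else 0

/-- A subgroup of `PSL(2,ℝ)` is discrete if it is a discrete subset of the
topological group `PSL(2,ℝ)`. -/
def IsDiscreteSubgroup (G : Subgroup PSL2R) : Prop := DiscreteTopology G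

/-- The boundary circle `∂ℍ² = ℝ ∪ {∞}`, realized as the real projective line. -/
def Boundary := Projectivization ℝ (Fin 2 → ℝ)

/-- An element of `SL(2,ℝ)`, viewed as an invertible matrix. -/
def slInvertible (g : SL2R) : Invertible (g : Matrix (Fin 2) (Fin 2) ℝ) :=
  haveI : Invertible (g : Matrix (Fin 2) (Fin 2) ℝ).det := by rw [g.prop]; exact invertibleOne
  Matrix.invertibleOfDetInvertible _

/-- The (Möbius) action of `SL(2,ℝ)` on the boundary circle `∂ℍ² = ℝP¹`. -/
def boundaryAct (g : SL2R) (p : Boundary) : Boundary :=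
  Projectivization.map
    ((Matrix.toLinearEquiv' (g : Matrix (Fin 2) (Fin 2) ℝ) (slInvertible g)) :
      (Fin 2 → ℝ) →ₗ[ℝ] (Fin 2 → ℝ))
    (Matrix.toLinearEquiv' (g : Matrix (Fin 2) (Fin 2) ℝ) (slInvertible g)).injective p

/-- A subgroup of `PSL(2,ℝ)` is elementary if it has a finite orbit in `ℍ² ∪ ∂ℍ²`:
either the orbit of some point of the hyperbolic plane `ℍ²` is finite, or the orbit of some
point of the boundary circle `∂ℍ²` is finite. (The action of a class in `PSL(2,ℝ)` is
computed via representatives in `SL(2,ℝ)`; the center acts trivially.) -/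
def IsElementary (G : Subgroup PSL2R) : Prop :=
  (∃ z : UpperHalfPlane,
    Set.Finite {w : UpperHalfPlane | ∃ g : SL2R, (QuotientGroup.mk g : PSL2R) ∈ G ∧ g • z = w}) ∨
  (∃ p : Boundary,
    Set.Finite {q : Boundary | ∃ g : SL2R, (QuotientGroup.mk g : PSL2R) ∈ G ∧ boundaryAct g p = q})

end

open Matrix Real

instance sl2_topGroup : IsTopologicalGroup SL2R :=
  @Matrix.SpecialLinearGroup.topologicalGroup (Fin 2) ℝ _ _ _ _ _

/-- trace on SL2 -/
noncomputable def t (M : SL2R) : ℝ := M.1 0 0 + M.1 1 1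

lemma sl_det (M : SL2R) : M.1 0 0 * M.1 1 1 - M.1 0 1 * M.1 1 0 = 1 := by
  have := M.2
  rwa [Matrix.det_fin_two] at this

lemma inv00 (M : SL2R) : (M⁻¹).1 0 0 = M.1 1 1 := by
  rw [Matrix.SpecialLinearGroup.SL2_inv_expl]; rfl
lemma inv01 (M : SL2R) : (M⁻¹).1 0 1 = - M.1 0 1 := by
  rw [Matrix.SpecialLinearGroup.SL2_inv_expl]; rfl
lemma inv10 (M : SL2R) : (M⁻¹).1 1 0 = - M.1 1 0 := by
  rw [Matrix.SpecialLinearGroup.SL2_inv_expl]; rfl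
lemma inv11 (M : SL2R) : (M⁻¹).1 1 1 = M.1 0 0 := by
  rw [Matrix.SpecialLinearGroup.SL2_inv_expl]; rfl

lemma mulE (M N : SL2R) (i j : Fin 2) :
    (M * N).1 i j = M.1 i 0 * N.1 0 j + M.1 i 1 * N.1 1 j := by
  rw [Matrix.SpecialLinearGroup.coe_mul, Matrix.mul_apply, Fin.sum_univ_two]

lemma negE (M : SL2R) (i j : Fin 2) : (-M).1 i j = - M.1 i j := by
  rw [Matrix.SpecialLinearGroup.coe_neg, Matrix.neg_apply]

lemma oneE00 : (1 : SL2R).1 0 0 = 1 := rfl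
lemma oneE11 : (1 : SL2R).1 1 1 = 1 := rfl
lemma oneE01 : (1 : SL2R).1 0 1 = 0 := rfl
lemma oneE10 : (1 : SL2R).1 1 0 = 0 := rfl

lemma sl_ext {M N : SL2R} (h00 : M.1 0 0 = N.1 0 0) (h01 : M.1 0 1 = N.1 0 1)
    (h10 : M.1 1 0 = N.1 1 0) (h11 : M.1 1 1 = N.1 1 1) : M = N := by
  apply Subtype.ext
  ext i j
  fin_cases i <;> fin_cases j <;> assumption

lemma t_one : t 1 = 2 := by norm_num [t, oneE00, oneE11]

lemma t_neg (M : SL2R) : t (-M) = - t M := by simp only [t, negE]; ring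

lemma t_inv (M : SL2R) : t M⁻¹ = t M := by
  simp only [t, inv00, inv11]; ring

lemma t_comm (M N : SL2R) : t (M * N) = t (N * M) := by
  simp only [t, mulE]; ring

lemma t_K (M N : SL2R) : t (M * N) + t (M * N⁻¹) = t M * t N := by
  simp only [t, mulE, inv00, inv11, inv01, inv10]; ring

lemma t_conj (h M : SL2R) : t (h * M * h⁻¹) = t M := by
  rw [t_comm]; congr 1; group

lemma t_sq (M : SL2R) : t (M * M) = t M ^ 2 - 2 := by
  have := t_K M M
  rw [mul_inv_cancel, t_one] at this
  linarith

/-- trace of commutator minus two -/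
noncomputable def tau (E D : SL2R) : ℝ := t (E * D * E⁻¹ * D⁻¹) - 2

lemma fricke (A B : SL2R) :
    tau A B = t A ^ 2 + t B ^ 2 + t (A * B) ^ 2 - t A * t B * t (A * B) - 4 := by
  have h1 := t_K (A * B * A⁻¹) B
  rw [t_conj] at h1
  have h2 := t_K (A * B) (B⁻¹ * A)
  have e1 : A * B * (B⁻¹ * A) = A * A := by group
  have e2 : A * B * (B⁻¹ * A)⁻¹ = A * B * A⁻¹ * B := by group
  rw [e1, e2, t_sq, t_comm B⁻¹ A] at h2
  have h3 := t_K A B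
  have h4 : t (A * B⁻¹) = t A * t B - t (A * B) := by linarith
  rw [h4] at h2
  unfold tau
  linear_combination h1 - h2

lemma tau_comm (A B : SL2R) : tau A B = tau B A := by
  rw [fricke, fricke, t_comm A B]; ring

lemma tau_inv (A B : SL2R) : tau A B⁻¹ = tau A B := by
  rw [fricke, fricke, t_inv]
  have h3 := t_K A B
  have h4 : t (A * B⁻¹) = t A * t B - t (A * B) := by linarith
  rw [h4]; ring

lemma t_EDED (E D : SL2R) : t (E * (D * E * D⁻¹)) = t E ^ 2 - 2 - tau E D := by
  have h := t_K E (D * E * D⁻¹)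
  rw [t_conj] at h
  have : E * (D * E * D⁻¹)⁻¹ = E * D * E⁻¹ * D⁻¹ := by group
  rw [this] at h
  unfold tau
  linarith

lemma tau_step (E D : SL2R) :
    tau E (D * E * D⁻¹) = tau E D * (4 - t E ^ 2 + tau E D) := by
  rw [fricke E (D * E * D⁻¹), t_conj, t_EDED]
  ring

lemma tau_mul (A B : SL2R) : tau (A * B) A = tau A B := by
  rw [tau_comm]
  unfold tau
  have : A * (A * B) * A⁻¹ * (A * B)⁻¹ = A * (A * B * A⁻¹ * B⁻¹) * A⁻¹ := by group
  rw [this, t_conj]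

lemma tau_conj (h A B : SL2R) : tau (h * A * h⁻¹) B = tau A (h⁻¹ * B * h) := by
  unfold tau
  have : h * A * h⁻¹ * B * (h * A * h⁻¹)⁻¹ * B⁻¹ =
    h * (A * (h⁻¹ * B * h) * A⁻¹ * (h⁻¹ * B * h)⁻¹) * h⁻¹ := by group
  rw [this, t_conj]

lemma tau_factor (A C : SL2R) :
    tau A (C * A * C⁻¹) = - (t (A * (C * A * C⁻¹)) - 2) * (t (A * (C * A * C⁻¹)⁻¹) - 2) := by
  have h := t_K A (C * A * C⁻¹)
  rw [fricke, t_conj] at *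
  have h4 : t (A * (C * A * C⁻¹)⁻¹) = t A * t A - t (A * (C * A * C⁻¹)) := by linarith
  rw [h4]; ring

lemma cont_t : Continuous t := by
  unfold t
  have h : Continuous (fun g : SL2R => (g : Matrix (Fin 2) (Fin 2) ℝ)) := continuous_induced_dom
  exact (h.matrix_elem 0 0).add (h.matrix_elem 1 1)

lemma cont_tau {X : Type*} [TopologicalSpace X] {f g : X → SL2R} (hf : Continuous f)
    (hg : Continuous g) : Continuous (fun x => tau (f x) (g x)) := by
  unfold tau
  exact (cont_t.comp (by fun_prop)).sub continuous_const

lemma mem_center_sl (c : SL2R) : c ∈ Subgroup.center SL2R ↔ c = 1 ∨ c = -1 := by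
  constructor
  · intro h
    obtain ⟨r, hr, hc⟩ := Matrix.SpecialLinearGroup.mem_center_iff.1 h
    simp only [Fintype.card_fin] at hr
    have hr' : (r - 1) * (r + 1) = 0 := by linear_combination hr
    rcases mul_eq_zero.1 hr' with h | h
    · replace h : r = 1 := by linarith
      left; apply Subtype.ext; rw [← hc, h]; simp
    · replace h : r = -1 := by linarith
      right; apply Subtype.ext; rw [← hc, h]
      ext i j; fin_cases i <;> fin_cases j <;> simp
  · rintro (h | h) <;> subst h
    · exact Subgroup.one_mem _
    · rw [Subgroup.mem_center_iff]; intro g; simp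

lemma mk_eq_iff (A B : SL2R) : (QuotientGroup.mk A : PSL2R) = QuotientGroup.mk B ↔ B = A ∨ B = -A := by
  rw [QuotientGroup.eq, mem_center_sl]
  constructor
  · rintro (h | h)
    · left; rw [inv_mul_eq_one] at h; exact h.symm
    · right; rw [inv_mul_eq_iff_eq_mul] at h; rw [h]; simp
  · rintro (h | h) <;> subst h <;> simp

open Matrix Real

lemma rot00 (x : ℝ) : (rotMat x).1 0 0 = cos x := rfl
lemma rot01 (x : ℝ) : (rotMat x).1 0 1 = sin x := rfl
lemma rot10 (x : ℝ) : (rotMat x).1 1 0 = -sin x := rfl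
lemma rot11 (x : ℝ) : (rotMat x).1 1 1 = cos x := rfl

lemma rotMat_add (x y : ℝ) : rotMat (x + y) = rotMat x * rotMat y := by
  apply sl_ext <;> simp only [mulE, rot00, rot01, rot10, rot11, cos_add, sin_add] <;> ring

lemma rotMat_zero : rotMat 0 = 1 := by
  apply sl_ext <;> simp [rot00, rot01, rot10, rot11, oneE00, oneE01, oneE10, oneE11]

lemma rotMat_neg (x : ℝ) : rotMat (-x) = (rotMat x)⁻¹ := by
  rw [eq_inv_iff_mul_eq_one, ← rotMat_add, neg_add_cancel, rotMat_zero]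

lemma rotMat_pi_sub (x : ℝ) : rotMat (π - x) = - rotMat (-x) := by
  apply sl_ext <;> simp [negE, rot00, rot01, rot10, rot11]

lemma t_rot (x : ℝ) : t (rotMat x) = 2 * cos x := by
  simp only [t, rot00, rot11]; ring

/-- an upper triangular matrix -/
noncomputable def upMat (x y : ℝ) (hy : y ≠ 0) : SL2R :=
  ⟨!![y, x; 0, y⁻¹], by simp [Matrix.det_fin_two_of, hy]⟩

lemma up00 (x y : ℝ) (hy : y ≠ 0) : (upMat x y hy).1 0 0 = y := rfl
lemma up01 (x y : ℝ) (hy : y ≠ 0) : (upMat x y hy).1 0 1 = x := rfl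
lemma up10 (x y : ℝ) (hy : y ≠ 0) : (upMat x y hy).1 1 0 = 0 := rfl
lemma up11 (x y : ℝ) (hy : y ≠ 0) : (upMat x y hy).1 1 1 = y⁻¹ := rfl

/-- Normal form of traceless matrices with positive determinant. -/
lemma normal_form (a b c : ℝ) (h : 0 < -a ^ 2 - b * c) :
    ∃ (s x y : ℝ), y ≠ 0 ∧ s ^ 2 = -a ^ 2 - b * c ∧ a = - s * x * y⁻¹ ∧ b = s * (x ^ 2 + y ^ 2) ∧
      c = - s * (y⁻¹) ^ 2 := by
  have hc : c ≠ 0 := by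
    rintro rfl
    nlinarith [sq_nonneg a]
  obtain ⟨s, hs, hsc⟩ : ∃ s, s ^ 2 = -a ^ 2 - b * c ∧ 0 < s / (-c) := by
    rcases lt_or_gt_of_ne hc with hc | hc
    · refine ⟨√(-a ^ 2 - b * c), Real.sq_sqrt h.le, div_pos (Real.sqrt_pos.2 h) (by linarith)⟩
    · refine ⟨-√(-a ^ 2 - b * c), by rw [neg_sq, Real.sq_sqrt h.le], ?_⟩
      rw [neg_div_neg_eq]
      exact div_pos (Real.sqrt_pos.2 h) hc
  have hs0 : s ≠ 0 := by rintro rfl; simp at hsc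
  have hy : √(s / (-c)) ≠ 0 := (Real.sqrt_pos.2 hsc).ne'
  have hy2 : √(s / (-c)) ^ 2 = s / (-c) := Real.sq_sqrt hsc.le
  refine ⟨s, - a * √(s / (-c)) / s, √(s / (-c)), hy, hs, ?_, ?_, ?_⟩
  · rw [neg_mul, neg_mul, mul_div_cancel₀ _ hs0, neg_mul, neg_mul, neg_neg, mul_assoc, mul_inv_cancel₀ hy, mul_one]
  · rw [div_pow, mul_pow, hy2]
    field_simp
    linear_combination hs
  · rw [inv_pow, hy2]; field_simp

lemma conj_rot (E : SL2R) (hE : |t E| < 2) :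
    ∃ h : SL2R, E = h * rotMat (arccos (t E / 2)) * h⁻¹ ∨ E = h * rotMat (-arccos (t E / 2)) * h⁻¹ := by
  have hE' := abs_lt.1 hE
  set θ := arccos (t E / 2) with hθ
  have hcos : cos θ = t E / 2 := cos_arccos (by linarith) (by linarith)
  have hdet := sl_det E
  have hsin2 := sin_sq_add_cos_sq θ
  have hsin : 0 ≤ sin θ := sin_nonneg_of_nonneg_of_le_pi (arccos_nonneg _) (arccos_le_pi _)
  have hd : 0 < -((E.1 0 0 - E.1 1 1) / 2) ^ 2 - E.1 0 1 * E.1 1 0 := by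
    unfold t at hE'
    nlinarith
  obtain ⟨s, x, y, hy, hs, ha, hb, hc⟩ := normal_form _ _ _ hd
  have hss : s ^ 2 = sin θ ^ 2 := by
    rw [hs]
    have : sin θ ^ 2 = 1 - cos θ ^ 2 := by linarith
    rw [this, hcos]; unfold t; linear_combination hdet
  unfold t at hcos
  have hyy : y * y⁻¹ = 1 := mul_inv_cancel₀ hy
  rcases sq_eq_sq_iff_eq_or_eq_neg.1 hss with h | h
  · refine ⟨upMat x y hy, Or.inl ?_⟩
    apply sl_ext <;> simp only [mulE, inv00, inv01, inv10, inv11, rot00, rot01, rot10, rot11,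
      up00, up01, up10, up11] <;> rw [h] at ha hb hc
    · linear_combination ha - hcos - cos θ * hyy
    · linear_combination hb
    · linear_combination hc
    · linear_combination - ha - hcos - cos θ * hyy
  · refine ⟨upMat x y hy, Or.inr ?_⟩
    apply sl_ext <;> simp only [mulE, inv00, inv01, inv10, inv11, rot00, rot01, rot10, rot11,
      up00, up01, up10, up11, cos_neg, sin_neg] <;> rw [h] at ha hb hc
    · linear_combination ha - hcos - cos θ * hyy
    · linear_combination hb
    · linear_combination hc
    · linear_combination - ha - hcos - cos θ * hyy

lemma tau_rot (x : ℝ) (D : SL2R) : 0 ≤ tau (rotMat x) D := by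
  have h1 := sin_sq_add_cos_sq x
  have h2 := sl_det D
  have : tau (rotMat x) D = sin x ^ 2 * ((D.1 0 0 - D.1 1 1) ^ 2 + (D.1 0 1 + D.1 1 0) ^ 2) := by
    simp only [tau, t, mulE, inv00, inv01, inv10, inv11, rot00, rot01, rot10, rot11]
    linear_combination (2 * (D.1 0 0 * D.1 1 1 - D.1 0 1 * D.1 1 0)) * h1 + 2 * h2
  rw [this]; positivity

lemma tau_nonneg (E D : SL2R) (hE : |t E| < 2) : 0 ≤ tau E D := by
  obtain ⟨h, h1 | h1⟩ := conj_rot E hE <;> rw [h1, tau_conj] <;> exact tau_rot _ _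

/-- `T` is of the form `2 cos (rational multiple of π)` -/
def RatTr (T : ℝ) : Prop := ∃ θ : ℝ, T = 2 * cos θ ∧ ¬ Irrational (θ / π)

lemma ratTr_root {T : ℝ} (h : RatTr T) : ∃ (ζ : ℂ) (n : ℕ), 0 < n ∧ ζ ^ n = 1 ∧ (T : ℂ) = ζ + ζ⁻¹ := by
  obtain ⟨θ, rfl, hirr⟩ := h
  unfold Irrational at hirr
  push Not at hirr
  obtain ⟨q, hq⟩ := hirr
  have hθ : θ = q * π := by rw [hq]; field_simp
  refine ⟨Complex.exp (θ * Complex.I), 2 * q.den, by have := q.den_pos; omega, ?_, ?_⟩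
  · rw [← Complex.exp_nat_mul, Complex.exp_eq_one_iff]
    refine ⟨q.num, ?_⟩
    have hqd : (q : ℂ) * q.den = q.num := by exact_mod_cast Rat.mul_den_eq_num q
    rw [hθ]; push_cast
    linear_combination (2 * (π : ℂ) * Complex.I) * hqd
  · rw [← Complex.exp_neg]
    push_cast
    rw [Complex.two_cos, neg_mul]

lemma ratTr_integral {T : ℝ} (h : RatTr T) : IsIntegral ℤ T := by
  obtain ⟨ζ, n, hn, hζ, hT⟩ := ratTr_root h
  have h1 : IsIntegral ℤ ζ := IsIntegral.of_pow hn (by rw [hζ]; exact isIntegral_one)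
  have h2 : IsIntegral ℤ ζ⁻¹ := IsIntegral.of_pow hn (by rw [inv_pow, hζ, inv_one]; exact isIntegral_one)
  have h3 : IsIntegral ℤ (T : ℂ) := by rw [hT]; exact h1.add h2
  exact (isIntegral_algHom_iff (Complex.ofRealAm.restrictScalars ℤ) Complex.ofReal_injective).1 h3

lemma dick_hom {R S : Type*} [CommRing R] [CommRing S] (f : R →+* S) (x : R) (n : ℕ) :
    f (Polynomial.eval x (Polynomial.dickson 1 1 n)) = Polynomial.eval (f x) (Polynomial.dickson 1 1 n) := by
  rw [← Polynomial.eval_map_apply, Polynomial.map_dickson, map_one]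

lemma ratTr_finite (K : IntermediateField ℚ ℝ) [FiniteDimensional ℚ K] :
    {x : K | RatTr (x : ℝ)}.Finite := by
  have : NumberField K := ⟨⟩
  refine (NumberField.Embeddings.finite_of_norm_le K ℂ 2).subset ?_
  intro x hx
  refine ⟨?_, ?_⟩
  · exact (isIntegral_algHom_iff (K.val.restrictScalars ℤ) K.val.injective).1 (ratTr_integral hx)
  · intro φ
    obtain ⟨ζ, n, hn, hζ, hT⟩ := ratTr_root hx
    have hζ0 : ζ ≠ 0 := by rintro rfl; rw [zero_pow hn.ne'] at hζ; exact zero_ne_one hζ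
    have hP : Polynomial.eval ((x : ℝ) : ℂ) (Polynomial.dickson 1 1 n) = 2 := by
      rw [hT, Polynomial.dickson_one_one_eval_add_inv _ _ (mul_inv_cancel₀ hζ0), inv_pow, hζ]
      norm_num
    have hK : Polynomial.eval x (Polynomial.dickson 1 (1 : K) n) = 2 := by
      have e : Function.Injective (Complex.ofRealHom.comp (algebraMap K ℝ)) := RingHom.injective _
      apply e
      rw [dick_hom, map_ofNat]
      exact hP
    have hφ : Polynomial.eval (φ x) (Polynomial.dickson 1 (1 : ℂ) n) = 2 := by
      rw [← dick_hom, hK, map_ofNat]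
    obtain ⟨η, hη⟩ : ∃ η : ℂ, η * η - φ x * η + 1 = 0 := by
      obtain ⟨s, hs⟩ := IsAlgClosed.exists_pow_nat_eq (φ x ^ 2 - 4) (n := 2) two_pos
      refine ⟨(φ x + s) / 2, ?_⟩
      linear_combination hs / 4
    have hη0 : η ≠ 0 := by rintro rfl; simp at hη
    have hφη : φ x = η + η⁻¹ := by
      field_simp
      linear_combination -hη
    rw [hφη, Polynomial.dickson_one_one_eval_add_inv _ _ (mul_inv_cancel₀ hη0), inv_pow] at hφ
    have hη1 : η ^ n = 1 := by
      have h0 : η ^ n ≠ 0 := pow_ne_zero _ hη0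
      field_simp at hφ
      have : (η ^ n - 1) ^ 2 = 0 := by linear_combination hφ
      have := pow_eq_zero_iff (two_ne_zero) |>.1 this
      linear_combination this
    have hn1 : ‖η‖ = 1 := Complex.norm_eq_one_of_pow_eq_one hη1 hn.ne'
    rw [hφη]
    refine (norm_add_le _ _).trans ?_
    rw [norm_inv, hn1]; norm_num

lemma jorgensen (G : Subgroup SL2R) (E D : SL2R) (hE : E ∈ G) (hD : D ∈ G) (h2 : |t E| < 2)
    (h0 : tau E D ≠ 0) (h1 : tau E D + 4 - t E ^ 2 < 1) :
    ∃ M ∈ G, |t M| < 2 ∧ ¬ RatTr (t M) := by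
  by_contra! hcon
  have hpos : 0 < tau E D := lt_of_le_of_ne (tau_nonneg E D h2) h0.symm
  have hx4 : t E ^ 2 < 4 := by
    have := sq_lt_sq' (abs_lt.1 h2).1 (abs_lt.1 h2).2
    linarith
  let Dk : ℕ → SL2R := fun k => Nat.rec D (fun _ X => X * E * X⁻¹) k
  have Dsucc : ∀ k, Dk (k + 1) = Dk k * E * (Dk k)⁻¹ := fun k => rfl
  have DG : ∀ k, Dk k ∈ G := by
    intro k
    induction k with
    | zero => exact hD
    | succ k ih => rw [Dsucc]; exact G.mul_mem (G.mul_mem ih hE) (G.inv_mem ih)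
  let τ : ℕ → ℝ := fun k => tau E (Dk k)
  have τsucc : ∀ k, τ (k + 1) = τ k * (4 - t E ^ 2 + τ k) := by
    intro k
    simp only [τ]
    rw [Dsucc, tau_step]
  have hτ : ∀ k, 0 < τ k ∧ τ k ≤ tau E D := by
    intro k
    induction k with
    | zero => exact ⟨hpos, le_rfl⟩
    | succ k ih =>
      rw [τsucc]
      refine ⟨mul_pos ih.1 (by linarith), ?_⟩
      nlinarith
  have hanti : StrictAnti τ := by
    apply strictAnti_nat_of_succ_lt
    intro k
    rw [τsucc]
    have := hτ k
    nlinarith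
  have hT : ∀ k, t (E * Dk (k + 1)) = t E ^ 2 - 2 - τ k := by
    intro k; rw [Dsucc, t_EDED]
  have hrat : ∀ k, RatTr (t (E * Dk (k + 1))) := by
    intro k
    apply hcon _ (G.mul_mem hE (DG (k + 1)))
    rw [hT, abs_lt]
    have := hτ k
    constructor <;> linarith
  have hratE : RatTr (t E) := hcon _ hE h2
  let K : IntermediateField ℚ ℝ := IntermediateField.adjoin ℚ {t E, t (E * Dk 1)}
  have : FiniteDimensional ℚ K := by
    apply IntermediateField.finiteDimensional_adjoin
    intro x hx
    have : IsIntegral ℤ x := by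
      rcases hx with hx | hx
      · rw [hx]; exact ratTr_integral hratE
      · rw [hx]; exact ratTr_integral (hrat 0)
    exact this.tower_top
  have hKx : t E ∈ K := IntermediateField.subset_adjoin _ _ (by simp)
  have hKT : t (E * Dk 1) ∈ K := IntermediateField.subset_adjoin _ _ (by simp)
  have hK2 : (2 : ℝ) ∈ K := by simp
  have hK4 : (4 : ℝ) ∈ K := by simp
  have hKτ : ∀ k, τ k ∈ K := by
    intro k
    induction k with
    | zero =>
      have : τ 0 = t E ^ 2 - 2 - t (E * Dk 1) := by have := hT 0; rw [zero_add] at this; rw [this]; ring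
      rw [this]
      exact sub_mem (sub_mem (pow_mem hKx 2) hK2) hKT
    | succ k ih =>
      rw [τsucc]
      exact mul_mem ih (add_mem (sub_mem hK4 (pow_mem hKx 2)) ih)
  have hfin := ratTr_finite K
  have hmem : ∀ k, t E ^ 2 - 2 - τ k ∈ K := fun k => sub_mem (sub_mem (pow_mem hKx 2) hK2) (hKτ k)
  refine Set.infinite_of_injective_forall_mem (f := fun k : ℕ => (⟨_, hmem k⟩ : K)) ?_ ?_ hfin
  · intro i j hij
    have := congrArg Subtype.val hij
    simp only at this
    exact hanti.injective (by linarith)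
  · intro k
    simp only [Set.mem_ofPred_eq]
    rw [← hT]; exact hrat k

open Matrix Real

/-- trace of `X C X C⁻¹` with `X = !![a, b; c, -a]` -/
noncomputable def trXC (a b c : ℝ) (C : SL2R) : ℝ :=
  (a * C.1 0 0 + b * C.1 1 0) * (a * C.1 1 1 - b * C.1 1 0)
  + (a * C.1 0 1 + b * C.1 1 1) * (c * C.1 1 1 + a * C.1 1 0)
  + (c * C.1 0 0 - a * C.1 1 0) * (-a * C.1 0 1 + b * C.1 0 0)
  + (c * C.1 0 1 - a * C.1 1 1) * (-c * C.1 0 1 - a * C.1 0 0)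

/-- The discriminating quantity -/
noncomputable def QQ (a b c : ℝ) (C : SL2R) : ℝ := trXC a b c C ^ 2 - (2 * (a ^ 2 + b * c)) ^ 2

lemma tau_QQ (A C : SL2R) :
    tau A (C * A * C⁻¹) = QQ ((A.1 0 0 - A.1 1 1) / 2) (A.1 0 1) (A.1 1 0) C := by
  have hC := sl_det C
  have hA := sl_det A
  have h1 : t (A * (C * A * C⁻¹)) = t A ^ 2 / 2 +
      trXC ((A.1 0 0 - A.1 1 1) / 2) (A.1 0 1) (A.1 1 0) C := by
    simp only [t, trXC, mulE, inv00, inv01, inv10, inv11]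
    linear_combination (A.1 0 0 + A.1 1 1) ^ 2 / 2 * hC
  have h2 : 2 * (((A.1 0 0 - A.1 1 1) / 2) ^ 2 + A.1 0 1 * A.1 1 0) = t A ^ 2 / 2 - 2 := by
    simp only [t]; linear_combination -2 * hA
  rw [fricke, t_conj, h1, QQ, h2]
  ring

lemma smul_I_of (C : SL2R) (h1 : C.1 0 0 = C.1 1 1) (h2 : C.1 0 1 = - C.1 1 0) :
    C • UpperHalfPlane.I = UpperHalfPlane.I := by
  have hdet := sl_det C
  apply UpperHalfPlane.ext
  rw [UpperHalfPlane.coe_specialLinearGroup_apply]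
  simp only [Algebra.algebraMap_self, RingHom.id_apply, UpperHalfPlane.coe_I]
  rw [div_eq_iff, h1, h2]
  · push_cast
    linear_combination (-(C.1 1 0 : ℂ)) * Complex.I_sq
  · intro h0
    have hr := congrArg Complex.re h0
    have hi := congrArg Complex.im h0
    simp at hr hi
    rw [hr, hi] at hdet
    simp at hdet

lemma ell_fix (a b c : ℝ) (h : 0 < -a ^ 2 - b * c) :
    ∃ z : UpperHalfPlane, ∀ C : SL2R, QQ a b c C = 0 → C • z = z := by
  obtain ⟨s, x, y, hy, hs, ha, hb, hc⟩ := normal_form a b c h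
  refine ⟨upMat x y hy • UpperHalfPlane.I, fun C hC => ?_⟩
  set H := upMat x y hy with hH
  have hyy : y * y⁻¹ = 1 := mul_inv_cancel₀ hy
  set C' := H⁻¹ * C * H with hC'
  have hCC : C = H * C' * H⁻¹ := by rw [hC']; group
  have hdet := sl_det C'
  have hP : trXC a b c C = - s ^ 2 * (C'.1 0 0 ^ 2 + C'.1 0 1 ^ 2 + C'.1 1 0 ^ 2 + C'.1 1 1 ^ 2) := by
    have hz : ∃ y', y' = y⁻¹ := ⟨_, rfl⟩
    rw [hC']
    simp only [mulE, inv00, inv01, inv10, inv11, hH, up00, up01, up10, up11, trXC]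
    rw [ha, hb, hc]
    field_simp
    ring
  have hsp : 0 < s ^ 2 := by rw [hs]; exact h
  set N := C'.1 0 0 ^ 2 + C'.1 0 1 ^ 2 + C'.1 1 0 ^ 2 + C'.1 1 1 ^ 2 with hN
  have hN0 : 0 ≤ N := by positivity
  have hQ : (s ^ 2) ^ 2 * (N - 2) * (N + 2) = 0 := by
    rw [QQ, hP] at hC
    have : a ^ 2 + b * c = - s ^ 2 := by linarith
    rw [this] at hC
    linear_combination hC
  have hN2 : N = 2 := by
    rcases mul_eq_zero.1 hQ with h | h
    · rcases mul_eq_zero.1 h with h | h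
      · have := pow_pos hsp 2; linarith
      · linarith
    · linarith
  have hsum : (C'.1 0 0 - C'.1 1 1) ^ 2 + (C'.1 0 1 + C'.1 1 0) ^ 2 = 0 := by
    rw [hN] at hN2; linear_combination hN2 - 2 * hdet
  have e1 : C'.1 0 0 - C'.1 1 1 = 0 := by
    apply pow_eq_zero_iff (two_ne_zero) |>.1
    nlinarith [sq_nonneg (C'.1 0 0 - C'.1 1 1), sq_nonneg (C'.1 0 1 + C'.1 1 0)]
  have e2 : C'.1 0 1 + C'.1 1 0 = 0 := by
    apply pow_eq_zero_iff (two_ne_zero) |>.1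
    nlinarith [sq_nonneg (C'.1 0 0 - C'.1 1 1), sq_nonneg (C'.1 0 1 + C'.1 1 0)]
  have := smul_I_of C' (by linarith) (by linarith)
  rw [hCC, mul_smul, mul_smul, inv_smul_smul, this]

/-- the boundary point of a vector -/
noncomputable def bpt (v : Fin 2 → ℝ) (hv : v ≠ 0) : Boundary := Projectivization.mk ℝ v hv

lemma sl_mulVec_ne (g : SL2R) {v : Fin 2 → ℝ} (hv : v ≠ 0) : g.1 *ᵥ v ≠ 0 := by
  intro h
  apply hv
  have : (g⁻¹ * g).1 *ᵥ v = 0 := by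
    rw [Matrix.SpecialLinearGroup.coe_mul, ← Matrix.mulVec_mulVec]
    rw [show (g : Matrix (Fin 2) (Fin 2) ℝ) *ᵥ v = 0 from h, Matrix.mulVec_zero]
  rw [inv_mul_cancel] at this
  simpa using this

lemma act_bpt (g : SL2R) (v : Fin 2 → ℝ) (hv : v ≠ 0) :
    boundaryAct g (bpt v hv) = bpt (g.1 *ᵥ v) (sl_mulVec_ne g hv) := rfl

lemma exists_bpt (p : Boundary) : ∃ v hv, p = bpt v hv :=
  ⟨p.rep, p.rep_nonzero, (Projectivization.mk_rep p).symm⟩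

lemma bpt_eq {v w : Fin 2 → ℝ} (hv : v ≠ 0) (hw : w ≠ 0) (h : v 0 * w 1 - v 1 * w 0 = 0) :
    bpt v hv = bpt w hw := by
  unfold bpt
  apply (Projectivization.mk_eq_mk_iff' ℝ v w hv hw).2
  have : w 0 ≠ 0 ∨ w 1 ≠ 0 := by
    by_contra! hc
    exact hw (by ext i; fin_cases i; exacts [hc.1, hc.2])
  rcases this with h0 | h0
  · refine ⟨v 0 / w 0, ?_⟩
    ext i
    fin_cases i
    · simp [h0]
    · simp only [Fin.mk_one, Pi.smul_apply, smul_eq_mul]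
      field_simp; linarith
  · refine ⟨v 1 / w 1, ?_⟩
    ext i
    fin_cases i
    · simp only [Fin.zero_eta, Pi.smul_apply, smul_eq_mul]
      field_simp; linarith
    · simp [h0]

lemma mulVec0 (g : SL2R) (v : Fin 2 → ℝ) : (g.1 *ᵥ v) 0 = g.1 0 0 * v 0 + g.1 0 1 * v 1 := by
  simp [Matrix.mulVec, dotProduct, Fin.sum_univ_two]
lemma mulVec1 (g : SL2R) (v : Fin 2 → ℝ) : (g.1 *ᵥ v) 1 = g.1 1 0 * v 0 + g.1 1 1 * v 1 := by
  simp [Matrix.mulVec, dotProduct, Fin.sum_univ_two]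

lemma act_eq (g : SL2R) {v w : Fin 2 → ℝ} (hv : v ≠ 0) (hw : w ≠ 0)
    (h : (g.1 0 0 * v 0 + g.1 0 1 * v 1) * w 1 - (g.1 1 0 * v 0 + g.1 1 1 * v 1) * w 0 = 0) :
    boundaryAct g (bpt v hv) = bpt w hw := by
  rw [act_bpt]
  apply bpt_eq
  rw [mulVec0, mulVec1]; exact h

/-- the action on the boundary -/
noncomputable instance bdAction : MulAction SL2R Boundary where
  smul := boundaryAct
  one_smul p := by
    obtain ⟨v, hv, rfl⟩ := exists_bpt p
    apply act_eq
    rw [oneE00, oneE01, oneE10, oneE11]; ring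
  mul_smul g h p := by
    obtain ⟨v, hv, rfl⟩ := exists_bpt p
    change boundaryAct _ _ = boundaryAct _ (boundaryAct _ _)
    rw [act_bpt, act_bpt, act_bpt]
    congr 1
    rw [Matrix.mulVec_mulVec]; rfl

lemma nil_fix (a b c : ℝ) (h : a ^ 2 + b * c = 0) (hne : ¬ (a = 0 ∧ b = 0 ∧ c = 0)) :
    ∃ p : Boundary, ∀ C : SL2R, QQ a b c C = 0 → boundaryAct C p = p := by
  by_cases hc : c = 0
  · subst hc
    have ha : a = 0 := by simpa using h
    subst ha
    have hb : b ≠ 0 := fun hb => hne ⟨rfl, hb, rfl⟩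
    refine ⟨bpt ![1, 0] (by intro h; simpa using congrFun h 0), fun C hC => ?_⟩
    apply act_eq
    simp only [QQ, trXC] at hC
    have : (b * C.1 1 0) ^ 4 = 0 := by linear_combination hC
    have := (mul_eq_zero.1 (pow_eq_zero_iff (by norm_num) |>.1 this)).resolve_left hb
    simp [this]
  · refine ⟨bpt ![a, c] (by intro h; exact hc (by simpa using congrFun h 1)), fun C hC => ?_⟩
    apply act_eq
    rw [QQ, h] at hC
    have hP : trXC a b c C = 0 := by
      apply pow_eq_zero_iff (two_ne_zero) |>.1
      linear_combination hC
    have hb : b * c = - a ^ 2 := by linarith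
    have hP2 : ((C.1 0 0 * a + C.1 0 1 * c) * c - (C.1 1 0 * a + C.1 1 1 * c) * a) ^ 2 = 0 := by
      have e : c ^ 2 * trXC a b c C =
        -((C.1 0 0 * a + C.1 0 1 * c) * c - (C.1 1 0 * a + C.1 1 1 * c) * a) ^ 2 := by
        obtain rfl : b = - a ^ 2 / c := by field_simp; linarith
        unfold trXC
        field_simp
        ring
      rw [hP] at e; linarith
    simpa using pow_eq_zero_iff (two_ne_zero) |>.1 hP2

lemma eigvec (a b c l : ℝ) (h : a ^ 2 + b * c = l ^ 2) :
    ∃ v : Fin 2 → ℝ, v ≠ 0 ∧ a * v 0 + b * v 1 = l * v 0 ∧ c * v 0 - a * v 1 = l * v 1 := by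
  obtain ⟨v, hv, h⟩ := (Matrix.exists_mulVec_eq_zero_iff (M := !![a - l, b; c, -a - l])).2
    (by rw [Matrix.det_fin_two_of]; linear_combination - h)
  refine ⟨v, hv, ?_, ?_⟩
  · have := congrFun h 0
    simp [Matrix.mulVec, dotProduct, Fin.sum_univ_two] at this
    linarith
  · have := congrFun h 1
    simp [Matrix.mulVec, dotProduct, Fin.sum_univ_two] at this
    linarith

lemma hyp_fix (a b c : ℝ) (h : 0 < a ^ 2 + b * c) :
    ∃ p : Fin 2 → Boundary, ∀ C : SL2R, QQ a b c C = 0 → ∃ i j, boundaryAct C (p i) = p j := by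
  set l := √(a ^ 2 + b * c) with hl
  have hlp : 0 < l := Real.sqrt_pos.2 h
  have hl2 : a ^ 2 + b * c = l ^ 2 := (Real.sq_sqrt h.le).symm
  obtain ⟨v, hv, v1, v2⟩ := eigvec a b c l hl2
  obtain ⟨w, hw, w1, w2⟩ := eigvec a b c (-l) (by rw [hl2]; ring)
  set d := v 0 * w 1 - v 1 * w 0 with hd
  have ea : a * d = l * (v 0 * w 1 + v 1 * w 0) := by
    rw [hd]; linear_combination w 1 * v1 - v 1 * w1
  have eb : b * d = -2 * l * v 0 * w 0 := by
    rw [hd]; linear_combination v 0 * w1 - w 0 * v1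
  have ec : c * d = 2 * l * v 1 * w 1 := by
    rw [hd]; linear_combination w 1 * v2 - v 1 * w2
  have hd0 : d ≠ 0 := by
    intro h0
    rw [h0] at ea eb ec
    simp only [mul_zero] at ea eb ec
    have f1 : v 0 * w 0 = 0 := by
      apply mul_left_cancel₀ hlp.ne'; linarith
    have f2 : v 1 * w 1 = 0 := by
      apply mul_left_cancel₀ hlp.ne'; linarith
    have f3 : v 0 * w 1 + v 1 * w 0 = 0 := by
      apply mul_left_cancel₀ hlp.ne'; linarith
    have f4 : v 0 * w 1 = 0 := by rw [h0] at hd; linarith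
    have f5 : v 1 * w 0 = 0 := by linarith
    apply hv
    have : w 0 ≠ 0 ∨ w 1 ≠ 0 := by
      by_contra! hc
      exact hw (by ext i; fin_cases i; exacts [hc.1, hc.2])
    rcases this with h | h
    · ext i; fin_cases i
      · exact (mul_eq_zero.1 f1).resolve_right h
      · exact (mul_eq_zero.1 f5).resolve_right h
    · ext i; fin_cases i
      · exact (mul_eq_zero.1 f4).resolve_right h
      · exact (mul_eq_zero.1 f2).resolve_right h
  refine ⟨![bpt v hv, bpt w hw], fun C hC => ?_⟩
  have hdet := sl_det C
  set al := (C.1 0 0 * v 0 + C.1 0 1 * v 1) * w 1 - (C.1 1 0 * v 0 + C.1 1 1 * v 1) * w 0 with hal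
  set be := (C.1 0 0 * v 0 + C.1 0 1 * v 1) * v 1 - (C.1 1 0 * v 0 + C.1 1 1 * v 1) * v 0 with hbe
  set ga := (C.1 0 0 * w 0 + C.1 0 1 * w 1) * w 1 - (C.1 1 0 * w 0 + C.1 1 1 * w 1) * w 0 with hga
  set ep := (C.1 0 0 * w 0 + C.1 0 1 * w 1) * v 1 - (C.1 1 0 * w 0 + C.1 1 1 * w 1) * v 0 with hep
  have k1 : al * ep - ga * be = - d ^ 2 := by
    rw [hal, hbe, hga, hep, hd]; linear_combination (-(v 0 * w 1 - v 1 * w 0) ^ 2) * hdet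
  have k2 : trXC a b c C * d ^ 2 = - 2 * l ^ 2 * (al * ep + ga * be) := by
    have : trXC a b c C * d ^ 2 = trXC (a * d) (b * d) (c * d) C := by unfold trXC; ring
    rw [this, ea, eb, ec, trXC, hal, hbe, hga, hep]; ring
  have k3 : (al * ep + ga * be) ^ 2 = (al * ep - ga * be) ^ 2 := by
    have l4 : (4 * l ^ 4) ≠ 0 := by positivity
    apply mul_left_cancel₀ l4
    rw [k1]
    rw [QQ, hl2] at hC
    have : (trXC a b c C * d ^ 2) ^ 2 = 4 * l ^ 4 * d ^ 4 := by linear_combination d ^ 4 * hC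
    rw [k2] at this
    linear_combination this
  have k4 : al * ep * (ga * be) = 0 := by linear_combination k3 / 4
  rcases mul_eq_zero.1 k4 with h | h <;> rcases mul_eq_zero.1 h with h | h
  · exact ⟨0, 1, act_eq C hv hw h⟩
  · exact ⟨1, 0, act_eq C hw hv h⟩
  · exact ⟨1, 1, act_eq C hw hw h⟩
  · exact ⟨0, 0, act_eq C hv hv h⟩

/-- the lift to `SL2` of a subgroup of `PSL2` -/
def lift (G : Subgroup PSL2R) : Subgroup SL2R := G.comap (QuotientGroup.mk' _)

lemma mem_lift (G : Subgroup PSL2R) (g : SL2R) : g ∈ lift G ↔ (QuotientGroup.mk g : PSL2R) ∈ G := Iff.rfl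

open scoped Pointwise in
lemma nonelem (G : Subgroup PSL2R) (hG : ¬ IsElementary G) (a b c : ℝ)
    (hne : ¬ (a = 0 ∧ b = 0 ∧ c = 0)) : ∃ C ∈ lift G, QQ a b c C ≠ 0 := by
  by_contra! hcon
  apply hG
  rcases lt_trichotomy (a ^ 2 + b * c) 0 with h | h | h
  · left
    obtain ⟨z, hz⟩ := ell_fix a b c (by linarith)
    refine ⟨z, (Set.finite_singleton z).subset ?_⟩
    rintro w ⟨g, hg, rfl⟩
    exact hz g (hcon g hg)
  · right
    obtain ⟨p, hp⟩ := nil_fix a b c h hne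
    refine ⟨p, (Set.finite_singleton p).subset ?_⟩
    rintro w ⟨g, hg, rfl⟩
    exact hp g (hcon g hg)
  · right
    obtain ⟨p, hp⟩ := hyp_fix a b c h
    have hp' : ∀ C : lift G, ∃ i j, C • p i = p j := fun C => hp C (hcon C C.2)
    classical
    let g : Fin 2 × Fin 2 → lift G := fun x =>
      if h : ∃ C : lift G, C • p x.1 = p x.2 then h.choose else 1
    have hcov : ⋃ x ∈ (Finset.univ : Finset (Fin 2 × Fin 2)),
        g x • ((MulAction.stabilizer (lift G) (p x.1) : Subgroup (lift G)) : Set (lift G)) = Set.univ := by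
      apply Set.eq_univ_of_forall
      intro C
      obtain ⟨i, j, hij⟩ := hp' C
      simp only [Set.mem_iUnion]
      refine ⟨(i, j), Finset.mem_univ _, ?_⟩
      have hex : ∃ C : lift G, C • p i = p j := ⟨C, hij⟩
      have hg : g (i, j) • p i = p j := by
        simp only [g]
        rw [dif_pos hex]
        exact hex.choose_spec
      rw [Set.mem_smul_set_iff_inv_smul_mem]
      simp only [smul_eq_mul, SetLike.mem_coe, MulAction.mem_stabilizer_iff, mul_smul]
      rw [hij, ← hg, inv_smul_smul]
    obtain ⟨k, -, hk⟩ := Subgroup.exists_finiteIndex_of_leftCoset_cover hcov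
    refine ⟨p k.1, ?_⟩
    have hfi := hk.index_ne_zero
    rw [MulAction.index_stabilizer] at hfi
    refine (Set.finite_of_ncard_ne_zero hfi).subset ?_
    rintro q ⟨g, hg, rfl⟩
    exact ⟨⟨g, hg⟩, rfl⟩

open Matrix Real Topology Filter

lemma QQ_cont (C : SL2R) : Continuous (fun v : Fin 3 → ℝ => QQ (v 0) (v 1) (v 2) C) := by
  unfold QQ trXC
  fun_prop

lemma QQ_smul (k a b c : ℝ) (C : SL2R) : QQ (k * a) (k * b) (k * c) C = k ^ 4 * QQ a b c C := by
  unfold QQ trXC; ring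

lemma nonelem_fin (G : Subgroup PSL2R) (hG : ¬ IsElementary G) :
    ∃ F : Finset (lift G), ∀ a b c : ℝ, ¬ (a = 0 ∧ b = 0 ∧ c = 0) → ∃ C ∈ F, QQ a b c C ≠ 0 := by
  obtain ⟨F, hF⟩ := (isCompact_sphere (0 : Fin 3 → ℝ) 1).elim_finite_subcover
    (fun C : lift G => {v : Fin 3 → ℝ | QQ (v 0) (v 1) (v 2) C ≠ 0})
    (fun C => isOpen_ne_fun (QQ_cont C) continuous_const) (by
      intro v hv
      have hv0 : v ≠ 0 := by
        rintro rfl; simp at hv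
      obtain ⟨C, hC, h⟩ := nonelem G hG (v 0) (v 1) (v 2) (by
        rintro ⟨h0, h1, h2⟩
        apply hv0
        ext i; fin_cases i; exacts [h0, h1, h2])
      exact Set.mem_iUnion.2 ⟨⟨C, hC⟩, h⟩)
  refine ⟨F, fun a b c hne => ?_⟩
  have hv0 : (![a, b, c] : Fin 3 → ℝ) ≠ 0 := by
    intro h
    exact hne ⟨by simpa using congrFun h 0, by simpa using congrFun h 1, by simpa using congrFun h 2⟩
  have hn : ‖(![a, b, c] : Fin 3 → ℝ)‖ ≠ 0 := norm_ne_zero_iff.2 hv0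
  have hmem : (‖(![a, b, c] : Fin 3 → ℝ)‖⁻¹ • (![a, b, c] : Fin 3 → ℝ)) ∈ Metric.sphere (0 : Fin 3 → ℝ) 1 := by
    rw [mem_sphere_zero_iff_norm, norm_smul, norm_inv, norm_norm, inv_mul_cancel₀ hn]
  have := hF hmem
  simp only [Set.mem_iUnion] at this
  obtain ⟨C, hC, h⟩ := this
  refine ⟨C, hC, fun h0 => h ?_⟩
  simp only [Pi.smul_apply, smul_eq_mul]
  rw [QQ_smul]
  simp [h0]

lemma nondisc (G : Subgroup PSL2R) (hG : ¬ IsDiscreteSubgroup G) (P : SL2R → Prop)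
    (hP : ∀ᶠ A in 𝓝 (1 : SL2R), P A) : ∃ A ∈ lift G, A ≠ 1 ∧ A ≠ -1 ∧ P A := by
  by_contra! hcon
  apply hG
  unfold IsDiscreteSubgroup
  apply discreteTopology_of_isOpen_singleton_one
  obtain ⟨U, hU, hUo, h1⟩ := eventually_nhds_iff.1 hP
  have hV : IsOpen ((QuotientGroup.mk : SL2R → PSL2R) '' U) := QuotientGroup.isOpenMap_coe U hUo
  rw [isOpen_induced_iff]
  refine ⟨_, hV, ?_⟩
  ext ⟨x, hx⟩
  simp only [Set.mem_preimage, Set.mem_image, Set.mem_singleton_iff]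
  constructor
  · rintro ⟨A, hA, rfl⟩
    apply Subtype.ext
    change (QuotientGroup.mk A : PSL2R) = QuotientGroup.mk 1
    by_contra hne
    rw [eq_comm, mk_eq_iff] at hne
    push Not at hne
    exact hcon A hx hne.1 hne.2 (hU A hA)
  · intro h
    exact ⟨1, h1, (congrArg Subtype.val h).symm⟩

/-- closeness to the identity, for a pair -/
def SmallPair (E D : SL2R) : Prop := -2 < t E ∧ tau E D + 4 - t E ^ 2 < 1

lemma small_ev {f g : SL2R → SL2R} (hf : Continuous f) (hg : Continuous g) (h1 : f 1 = 1) :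
    ∀ᶠ A in 𝓝 (1 : SL2R), SmallPair (f A) (g A) := by
  unfold SmallPair
  apply Filter.Eventually.and
  · have hc : Continuous (fun A => t (f A)) := cont_t.comp hf
    apply hc.continuousAt.eventually_const_lt
    beta_reduce
    rw [h1, t_one]; norm_num
  · have hc : Continuous (fun A => tau (f A) (g A) + 4 - t (f A) ^ 2) :=
      ((cont_tau hf hg).add continuous_const).sub ((cont_t.comp hf).pow 2)
    apply hc.continuousAt.eventually_lt_const
    have : tau 1 (g 1) = 0 := by
      unfold tau; rw [one_mul, inv_one, mul_one, mul_inv_cancel, t_one]; norm_num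
    beta_reduce
    rw [h1, t_one, this]; norm_num

lemma exists_irr (G : Subgroup PSL2R) (hG : ¬ IsElementary G) (hG' : ¬ IsDiscreteSubgroup G) :
    ∃ M ∈ lift G, |t M| < 2 ∧ ¬ RatTr (t M) := by
  obtain ⟨F, hF⟩ := nonelem_fin G hG
  obtain ⟨A, hA, hA1, hA2, hP⟩ := nondisc G hG' (fun A => ∀ C ∈ F,
      SmallPair (A * (C.1 * A * C.1⁻¹)) A ∧ SmallPair (A * (C.1 * A * C.1⁻¹)⁻¹) A ∧
      SmallPair (A * ((C.1 * A * C.1⁻¹) * A⁻¹ * (C.1 * A * C.1⁻¹)⁻¹)) A) (by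
    rw [Filter.eventually_all_finset]
    intro C hC
    refine (small_ev ?_ ?_ ?_).and ((small_ev ?_ ?_ ?_).and (small_ev ?_ ?_ ?_))
    any_goals fun_prop
    all_goals group)
  have hne : ¬ ((A.1 0 0 - A.1 1 1) / 2 = 0 ∧ A.1 0 1 = 0 ∧ A.1 1 0 = 0) := by
    rintro ⟨h0, h1, h2⟩
    have hd := sl_det A
    have h00 : A.1 1 1 = A.1 0 0 := by linarith
    rw [h1, h00] at hd
    have : (A.1 0 0 - 1) * (A.1 0 0 + 1) = 0 := by linear_combination hd
    rcases mul_eq_zero.1 this with h | h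
    · apply hA1
      apply sl_ext <;> simp only [oneE00, oneE01, oneE10, oneE11] <;> linarith
    · apply hA2
      apply sl_ext <;> simp only [negE, oneE00, oneE01, oneE10, oneE11] <;> linarith
  obtain ⟨⟨C, hCG⟩, hCF, hC⟩ := hF _ _ _ hne
  rw [← tau_QQ] at hC
  obtain ⟨s1, s2, s3⟩ := hP _ hCF
  simp only at s1 s2 s3 hC
  have hfac := tau_factor A C
  have hBG : C * A * C⁻¹ ∈ lift G := Subgroup.mul_mem _ (Subgroup.mul_mem _ hCG hA) (Subgroup.inv_mem _ hCG)
  have hst := tau_step A (C * A * C⁻¹)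
  set B := C * A * C⁻¹ with hB
  have hBi := Subgroup.inv_mem _ hBG
  have hAi := Subgroup.inv_mem _ hA
  rcases lt_or_gt_of_ne hC with hneg | hpos
  · -- the commutator is elliptic
    have hx : 4 ≤ t A ^ 2 := by
      by_contra! hlt
      have : |t A| < 2 := by
        apply abs_lt_of_sq_lt_sq (by linarith) (by norm_num)
      linarith [tau_nonneg A B this]
    have e : A * (B * A⁻¹ * B⁻¹) = A * B * A⁻¹ * B⁻¹ := by group
    have htau : tau (A * (B * A⁻¹ * B⁻¹)) A = tau A B * (4 - t A ^ 2 + tau A B) := by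
      rw [tau_mul, ← hst, ← tau_inv A (B * A * B⁻¹)]
      congr 1; group
    refine jorgensen (lift G) (A * (B * A⁻¹ * B⁻¹)) A (Subgroup.mul_mem _ hA
      (Subgroup.mul_mem _ (Subgroup.mul_mem _ hBG hAi) hBi)) hA (abs_lt.2 ⟨s3.1, ?_⟩) ?_ s3.2
    · rw [e]; unfold tau at hneg; linarith
    · rw [htau]
      exact (mul_pos_of_neg_of_neg hneg (by linarith)).ne'
  · have : t (A * B) < 2 ∨ t (A * B⁻¹) < 2 := by
      by_contra! hcc
      nlinarith
    rcases this with h | h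
    · exact jorgensen (lift G) (A * B) A (Subgroup.mul_mem _ hA hBG) hA (abs_lt.2 ⟨s1.1, h⟩)
        (by rw [tau_mul]; exact hC) s1.2
    · exact jorgensen (lift G) (A * B⁻¹) A (Subgroup.mul_mem _ hA hBi) hA (abs_lt.2 ⟨s2.1, h⟩)
        (by rw [tau_mul, tau_inv]; exact hC) s2.2

open Matrix Real Topology Filter

lemma conj10 (c : SL2R) (x : ℝ) : (c * rotMat x * c⁻¹).1 1 0 = - sin x * (c.1 1 0 ^ 2 + c.1 1 1 ^ 2) := by
  simp only [mulE, inv00, inv01, inv10, inv11, rot00, rot01, rot10, rot11]; ring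

lemma row_pos (c : SL2R) : 0 < c.1 1 0 ^ 2 + c.1 1 1 ^ 2 := by
  have hd := sl_det c
  by_contra! h
  have h0 : c.1 1 0 = 0 := by nlinarith [sq_nonneg (c.1 1 0), sq_nonneg (c.1 1 1)]
  have h1 : c.1 1 1 = 0 := by nlinarith [sq_nonneg (c.1 1 0), sq_nonneg (c.1 1 1)]
  rw [h0, h1] at hd; simp at hd

lemma isConj_mk (A B : SL2R) : IsConj (QuotientGroup.mk A : PSL2R) (QuotientGroup.mk B) ↔
    ∃ c : SL2R, B = c * A * c⁻¹ ∨ B = -(c * A * c⁻¹) := by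
  rw [isConj_iff]
  constructor
  · rintro ⟨c, hc⟩
    obtain ⟨c, rfl⟩ := QuotientGroup.mk_surjective c
    exact ⟨c, (mk_eq_iff _ _).1 hc⟩
  · rintro ⟨c, hc⟩
    exact ⟨QuotientGroup.mk c, (mk_eq_iff _ _).2 hc⟩

lemma rot_unique {x y : ℝ} (hx : x ∈ Set.Ioo 0 π) (hy : y ∈ Set.Ioo 0 π)
    (h : IsConj (QuotientGroup.mk (rotMat x) : PSL2R) (QuotientGroup.mk (rotMat y))) : x = y := by
  obtain ⟨c, hc | hc⟩ := (isConj_mk _ _).1 h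
  · have := congrArg t hc
    rw [t_conj, t_rot, t_rot] at this
    exact injOn_cos ⟨hx.1.le, hx.2.le⟩ ⟨hy.1.le, hy.2.le⟩ (by linarith)
  · have := congrArg (fun M : SL2R => M.1 1 0) hc
    beta_reduce at this
    rw [negE, conj10, rot10] at this
    have h1 := sin_pos_of_mem_Ioo hx
    have h2 := sin_pos_of_mem_Ioo hy
    nlinarith [mul_pos h1 (row_pos c)]

lemma rot_of_conj {x : ℝ} (hx : x ∈ Set.Ioo 0 π) {A : PSL2R}
    (h : IsConj (QuotientGroup.mk (rotMat x) : PSL2R) A) : rot A = ((2 * x : ℝ) : AddCircle (2 * π)) := by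
  have hex : ∃ θ ∈ Set.Ioo (0:ℝ) π, IsConj (QuotientGroup.mk (rotMat θ) : PSL2R) A := ⟨x, hx, h⟩
  unfold rot
  rw [dif_pos hex]
  have := rot_unique hex.choose_spec.1 hx (hex.choose_spec.2.trans h.symm)
  rw [this]

lemma circ_inj {x y : ℝ} (hx : x ∈ Set.Ico 0 π) (hy : y ∈ Set.Ico 0 π)
    (h : ((2 * x : ℝ) : AddCircle (2 * π)) = ((2 * y : ℝ) : AddCircle (2 * π))) : x = y := by
  have hp : Fact (0 < 2 * π) := ⟨by positivity⟩
  have := (AddCircle.coe_eq_coe_iff_of_mem_Ico (p := 2 * π) (a := 0)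
    (x := 2 * x) (y := 2 * y) ⟨by linarith [hx.1], by linarith [hx.2]⟩
    ⟨by linarith [hy.1], by linarith [hy.2]⟩).1 h
  linarith

lemma conj_of_rot {x : ℝ} (hx : x ∈ Set.Ioo 0 π) {A : PSL2R}
    (h : rot A = ((2 * x : ℝ) : AddCircle (2 * π))) : IsConj (QuotientGroup.mk (rotMat x) : PSL2R) A := by
  by_cases hex : ∃ θ ∈ Set.Ioo (0:ℝ) π, IsConj (QuotientGroup.mk (rotMat θ) : PSL2R) A
  · obtain ⟨y, hy, hc⟩ := hex
    rw [rot_of_conj hy hc] at h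
    rwa [← circ_inj ⟨hy.1.le, hy.2⟩ ⟨hx.1.le, hx.2⟩ h]
  · exfalso
    unfold rot at h
    rw [dif_neg hex] at h
    have h0 : ((2 * 0 : ℝ) : AddCircle (2 * π)) = ((2 * x : ℝ) : AddCircle (2 * π)) := by
      rw [← h]; simp
    have := circ_inj ⟨le_rfl, pi_pos⟩ ⟨hx.1.le, hx.2⟩ h0
    linarith [hx.1]

lemma arccos_mem {x : ℝ} (h : |x| < 2) : arccos (x / 2) ∈ Set.Ioo 0 π := by
  have h' := abs_lt.1 h
  exact ⟨arccos_pos.2 (by linarith), arccos_lt_pi.2 (by linarith)⟩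

lemma conj_of_ell (M : SL2R) (h : |t M| < 2) : ∃ x ∈ Set.Ioo 0 π,
    (x = arccos (t M / 2) ∨ x = π - arccos (t M / 2)) ∧
    IsConj (QuotientGroup.mk (rotMat x) : PSL2R) (QuotientGroup.mk M) := by
  have hm := arccos_mem h
  obtain ⟨c, hc | hc⟩ := conj_rot M h
  · exact ⟨_, hm, Or.inl rfl, (isConj_mk _ _).2 ⟨c, Or.inl hc⟩⟩
  · refine ⟨π - arccos (t M / 2), ⟨by linarith [hm.2], by linarith [hm.1]⟩, Or.inr rfl,
      (isConj_mk _ _).2 ⟨c, Or.inr ?_⟩⟩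
    rw [rotMat_pi_sub]
    simpa using hc

lemma abs_t_conj {A B : SL2R} (h : IsConj (QuotientGroup.mk A : PSL2R) (QuotientGroup.mk B)) :
    |t B| = |t A| := by
  obtain ⟨c, rfl | rfl⟩ := (isConj_mk _ _).1 h
  · rw [t_conj]
  · rw [t_neg, t_conj, abs_neg]

lemma rot_trace {A B : SL2R} (h : rot (QuotientGroup.mk A) = rot (QuotientGroup.mk B)) (hA : |t A| < 2) :
    |t A| = |t B| := by
  obtain ⟨x, hx, -, hc⟩ := conj_of_ell A hA
  rw [rot_of_conj hx hc] at h
  rw [abs_t_conj hc, abs_t_conj (conj_of_rot hx h.symm)]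

/-- complex linear part -/
noncomputable def zz (M : SL2R) : ℂ := ⟨(M.1 0 0 + M.1 1 1) / 2, (M.1 1 0 - M.1 0 1) / 2⟩
/-- complex antilinear part -/
noncomputable def ww (M : SL2R) : ℂ := ⟨(M.1 0 0 - M.1 1 1) / 2, (M.1 1 0 + M.1 0 1) / 2⟩

lemma zw_ext {M N : SL2R} (h1 : zz M = zz N) (h2 : ww M = ww N) : M = N := by
  have a1 := congrArg Complex.re h1
  have a2 := congrArg Complex.im h1
  have a3 := congrArg Complex.re h2
  have a4 := congrArg Complex.im h2
  simp only [zz, ww] at a1 a2 a3 a4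
  apply sl_ext <;> linarith

lemma zz_mul (M N : SL2R) : zz (M * N) = zz M * zz N + ww M * star (ww N) := by
  apply Complex.ext <;> simp [zz, ww, mulE] <;> ring

lemma ww_mul (M N : SL2R) : ww (M * N) = zz M * ww N + ww M * star (zz N) := by
  apply Complex.ext <;> simp [zz, ww, mulE] <;> ring

lemma zz_neg (M : SL2R) : zz (-M) = - zz M := by
  apply Complex.ext <;> simp [zz, negE] <;> ring

lemma ww_neg (M : SL2R) : ww (-M) = - ww M := by
  apply Complex.ext <;> simp [ww, negE] <;> ring

lemma zz_rot (x : ℝ) : zz (rotMat x) = ⟨cos x, - sin x⟩ := by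
  apply Complex.ext <;> simp [zz, rot00, rot01, rot10, rot11] <;> ring

lemma ww_rot (x : ℝ) : ww (rotMat x) = 0 := by
  apply Complex.ext <;> simp [ww, rot00, rot01, rot10, rot11]

lemma zw_norm (M : SL2R) : Complex.normSq (zz M) - Complex.normSq (ww M) = 1 := by
  simp only [Complex.normSq_apply, zz, ww]
  linear_combination sl_det M

lemma t_rot_mul (x : ℝ) (M : SL2R) :
    t (rotMat x * M) = 2 * ((zz M).re * cos x + (zz M).im * sin x) := by
  simp only [t, mulE, rot00, rot01, rot10, rot11, zz]; ring

/-- planar lemma -/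
lemma planar (a b a' b' : ℝ) (h1 : 1 ≤ a ^ 2 + b ^ 2)
    (h : ∀ x : ℝ, |a * cos x + b * sin x| < 1 → |a * cos x + b * sin x| = |a' * cos x + b' * sin x|) :
    (a' = a ∧ b' = b) ∨ (a' = -a ∧ b' = -b) := by
  set z : ℂ := ⟨a, b⟩ with hz
  set r := ‖z‖ with hr
  have hr2 : r ^ 2 = a ^ 2 + b ^ 2 := by
    rw [hr, ← Complex.normSq_eq_norm_sq, Complex.normSq_apply]; ring
  have hr0 : 0 ≤ r := norm_nonneg _
  have hr1 : 1 ≤ r := by nlinarith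
  have hca : a = r * cos z.arg := (Complex.norm_mul_cos_arg z).symm
  have hsa : b = r * sin z.arg := (Complex.norm_mul_sin_arg z).symm
  set φ := z.arg with hφ
  have hsc := sin_sq_add_cos_sq φ
  -- rewrite in rotated coordinates
  set p := a' * cos φ + b' * sin φ with hp
  set q := b' * cos φ - a' * sin φ with hq
  have key : ∀ y : ℝ, |r * cos y| < 1 → |r * cos y| = |p * cos y + q * sin y| := by
    intro y hy
    have e1 : a * cos (φ + y) + b * sin (φ + y) = r * cos y := by
      rw [cos_add, sin_add, hca, hsa]; linear_combination r * cos y * hsc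
    have e2 : a' * cos (φ + y) + b' * sin (φ + y) = p * cos y + q * sin y := by
      rw [cos_add, sin_add, hp, hq]; ring
    have := h (φ + y)
    rw [e1, e2] at this
    exact this hy
  have hq0 : q = 0 := by
    have := key (π / 2) (by simp)
    simp at this
    exact abs_eq_zero.1 this.symm
  have hpr : |r| = |p| := by
    have hc : cos (arccos (1 / (2 * r))) = 1 / (2 * r) := by
      apply cos_arccos
      · have : 0 ≤ 1 / (2 * r) := by positivity
        linarith
      · rw [div_le_one (by linarith)]; linarith
    have := key (arccos (1 / (2 * r))) (by
      rw [hc]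
      have : r * (1 / (2 * r)) = 1 / 2 := by field_simp
      rw [this]; norm_num [abs_lt])
    rw [hq0, hc, zero_mul, add_zero, abs_mul, abs_mul] at this
    have h0 : |1 / (2 * r)| ≠ 0 := by
      apply abs_ne_zero.2; positivity
    exact mul_right_cancel₀ h0 this
  have ha' : a' = p * cos φ - q * sin φ := by
    rw [hp, hq]; linear_combination - a' * hsc
  have hb' : b' = p * sin φ + q * cos φ := by
    rw [hp, hq]; linear_combination - b' * hsc
  rw [hq0] at ha' hb'
  rcases abs_eq_abs.1 hpr with e | e
  · left; rw [← e] at ha' hb'; constructor <;> linarith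
  · right
    have : p = -r := by linarith
    rw [this] at ha' hb'; constructor <;> linarith

lemma dense_ext (θ a b a' b' : ℝ) (hθ : Irrational (θ / π))
    (h : ∀ n : ℤ, |a * cos (n * θ) + b * sin (n * θ)| < 1 →
      |a * cos (n * θ) + b * sin (n * θ)| = |a' * cos (n * θ) + b' * sin (n * θ)|) (x : ℝ) :
    |a * cos x + b * sin x| < 1 → |a * cos x + b * sin x| = |a' * cos x + b' * sin x| := by
  have hirr : Irrational (θ / (2 * π)) := by
    have : θ / (2 * π) = θ / π / (2 : ℕ) := by push_cast; field_simp
    rw [this]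
    exact hθ.div_natCast (by norm_num)
  have hd := dense_addSubgroupClosure_pair_iff.2 hirr
  have hcl : IsClosed {x : ℝ | 1 ≤ |a * cos x + b * sin x| ∨
      |a * cos x + b * sin x| = |a' * cos x + b' * sin x|} := by
    have c1 : Continuous (fun x : ℝ => |a * cos x + b * sin x|) := by fun_prop
    have c2 : Continuous (fun x : ℝ => |a' * cos x + b' * sin x|) := by fun_prop
    exact (isClosed_le continuous_const c1).union (isClosed_eq c1 c2)
  have hsub : ((AddSubgroup.closure {θ, 2 * π} : AddSubgroup ℝ) : Set ℝ) ⊆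
      {x : ℝ | 1 ≤ |a * cos x + b * sin x| ∨
      |a * cos x + b * sin x| = |a' * cos x + b' * sin x|} := by
    intro y hy
    obtain ⟨n, m, rfl⟩ := AddSubgroup.mem_closure_pair.1 hy
    have e : n • θ + m • (2 * π) = n * θ + m * (2 * π) := by simp
    simp only [Set.mem_ofPred_eq]
    rw [e, cos_add_int_mul_two_pi, sin_add_int_mul_two_pi]
    by_cases hlt : |a * cos (n * θ) + b * sin (n * θ)| < 1
    · exact Or.inr (h n hlt)
    · exact Or.inl (not_lt.1 hlt)
  have hx := closure_minimal hsub hcl (hd x)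
  intro hlt
  rcases hx with hx | hx
  · linarith
  · exact hx

lemma rotMat_zpow (θ : ℝ) (n : ℤ) : rotMat θ ^ n = rotMat (n * θ) := by
  have hnat : ∀ k : ℕ, rotMat θ ^ k = rotMat (k * θ) := by
    intro k
    induction k with
    | zero => simp [rotMat_zero]
    | succ k ih => rw [pow_succ, ih, ← rotMat_add]; congr 1; push_cast; ring
  cases n with
  | ofNat k => simpa using hnat k
  | negSucc k =>
    rw [zpow_negSucc, hnat, ← rotMat_neg]; congr 1; push_cast; ring

lemma core {Γ : Type*} [Group Γ] (ρ₁ ρ₂ : Γ →* PSL2R) (α : Γ) (θ : ℝ) (hθ : Irrational (θ / π))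
    (h1 : ρ₁ α = QuotientGroup.mk (rotMat θ)) (h2 : ρ₂ α = QuotientGroup.mk (rotMat θ))
    (htr : ∀ (γ : Γ) (A B : SL2R), ρ₁ γ = QuotientGroup.mk A → ρ₂ γ = QuotientGroup.mk B →
      |t A| < 2 → |t A| = |t B|) :
    ∃ g : PSL2R, ∀ γ : Γ, ρ₁ γ = g * ρ₂ γ * g⁻¹ := by
  -- step 1: the linear parts agree up to sign
  have s1 : ∀ (γ : Γ) (A B : SL2R), ρ₁ γ = QuotientGroup.mk A → ρ₂ γ = QuotientGroup.mk B →
      zz B = zz A ∨ zz B = - zz A := by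
    intro γ A B hA hB
    have hn : 1 ≤ (zz A).re ^ 2 + (zz A).im ^ 2 := by
      have := zw_norm A
      have h0 := Complex.normSq_nonneg (ww A)
      rw [Complex.normSq_apply (zz A)] at this
      nlinarith
    have hp := planar (zz A).re (zz A).im (zz B).re (zz B).im hn
      (dense_ext θ _ _ _ _ hθ (by
        intro n hlt
        have e1 : ρ₁ (α ^ n * γ) = QuotientGroup.mk (rotMat (n * θ) * A) := by
          rw [map_mul, map_zpow, h1, hA, ← rotMat_zpow]; rfl
        have e2 : ρ₂ (α ^ n * γ) = QuotientGroup.mk (rotMat (n * θ) * B) := by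
          rw [map_mul, map_zpow, h2, hB, ← rotMat_zpow]; rfl
        have := htr _ _ _ e1 e2
        rw [t_rot_mul, t_rot_mul, abs_mul, abs_mul, abs_two] at this
        have := this (by linarith)
        linarith))
    rcases hp with ⟨e1, e2⟩ | ⟨e1, e2⟩
    · left; exact Complex.ext e1 e2
    · right; exact Complex.ext (by simpa using e1) (by simpa using e2)
  -- step 2: choose compatible lifts
  have s2 : ∀ γ : Γ, ∃ A B : SL2R, ρ₁ γ = QuotientGroup.mk A ∧ ρ₂ γ = QuotientGroup.mk B ∧ zz B = zz A := by
    intro γ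
    obtain ⟨A, hA⟩ := QuotientGroup.mk_surjective (ρ₁ γ)
    obtain ⟨B, hB⟩ := QuotientGroup.mk_surjective (ρ₂ γ)
    rcases s1 γ A B hA.symm hB.symm with h | h
    · exact ⟨A, B, hA.symm, hB.symm, h⟩
    · refine ⟨A, -B, hA.symm, ?_, by rw [zz_neg, h, neg_neg]⟩
      rw [← hB]; exact (mk_eq_iff _ _).2 (Or.inr rfl)
  choose A B hA hB hz using s2
  have hz0 : ∀ γ, zz (A γ) ≠ 0 := by
    intro γ h0
    have := zw_norm (A γ)
    rw [h0] at this
    have h0 := Complex.normSq_nonneg (ww (A γ))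
    simp at this
    linarith
  have hsin : sin θ ≠ 0 := by
    intro h0
    obtain ⟨n, hn⟩ := sin_eq_zero_iff.1 h0
    apply hθ
    refine ⟨n, ?_⟩
    rw [← hn]; push_cast; field_simp
  have s3 : ∀ γ γ' : Γ, ww (A γ) * star (ww (A γ')) = ww (B γ) * star (ww (B γ')) := by
    intro γ γ'
    have k0 := s1 (γ * γ') (A γ * A γ') (B γ * B γ') (by rw [map_mul, hA, hA]; rfl)
      (by rw [map_mul, hB, hB]; rfl)
    have k1 := s1 (γ * (α * γ')) (A γ * (rotMat θ * A γ')) (B γ * (rotMat θ * B γ'))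
      (by rw [map_mul, map_mul, h1, hA, hA]; rfl)
      (by rw [map_mul, map_mul, h2, hB, hB]; rfl)
    simp only [zz_mul, ww_mul, ww_rot, hz, zero_mul, add_zero, star_mul'] at k0 k1
    set u := zz (rotMat θ) with hu
    have hu0 : u ≠ 0 := by
      intro h0
      have := congrArg Complex.im h0
      rw [hu, zz_rot] at this
      simp at this
      exact hsin this
    have hsu0 : star u ≠ 0 := by simpa using hu0
    have huu : u - star u ≠ 0 := by
      intro h0
      have := congrArg Complex.im h0
      rw [hu, zz_rot] at this
      simp at this
      apply hsin; linarith
    rcases k0 with k0 | k0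
    · linear_combination -k0
    · rcases k1 with k1 | k1
      · apply mul_left_cancel₀ hsu0
        linear_combination -k1
      · exfalso
        have : zz (A γ) * zz (A γ') * (u - star u) = 0 := by
          linear_combination k1 / 2 - star u * k0 / 2
        exact mul_ne_zero (mul_ne_zero (hz0 _) (hz0 _)) huu this
  have hnorm : ∀ γ, Complex.normSq (ww (A γ)) = Complex.normSq (ww (B γ)) := by
    intro γ
    have a1 := zw_norm (A γ)
    have a2 := zw_norm (B γ)
    rw [hz] at a2
    linarith
  -- step 3: a common factor
  obtain ⟨c, hc1, hc⟩ : ∃ c : ℂ, ‖c‖ = 1 ∧ ∀ γ, ww (A γ) = c * ww (B γ) := by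
    by_cases hall : ∀ γ, ww (A γ) = 0
    · refine ⟨1, by simp, fun γ => ?_⟩
      have := hnorm γ
      rw [hall γ, map_zero] at this
      rw [hall γ, Complex.normSq_eq_zero.1 this.symm, mul_zero]
    · push Not at hall
      obtain ⟨γ₀, h0⟩ := hall
      have hs0 : star (ww (A γ₀)) ≠ 0 := by simpa using h0
      have hnn : ‖ww (A γ₀)‖ = ‖ww (B γ₀)‖ := by
        have := hnorm γ₀
        rw [Complex.normSq_eq_norm_sq, Complex.normSq_eq_norm_sq] at this
        exact (sq_eq_sq₀ (norm_nonneg _) (norm_nonneg _)).1 this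
      refine ⟨star (ww (B γ₀)) / star (ww (A γ₀)), ?_, fun γ => ?_⟩
      · rw [norm_div, norm_star, norm_star, hnn, div_self]
        rw [← hnn]; simpa using h0
      · have := s3 γ γ₀
        field_simp
        linear_combination this
  -- conjugate by a rotation
  set ψ := - c.arg / 2 with hψ
  set d := zz (rotMat ψ) with hd
  have hdc : d * d = c := by
    have hcc : c = ⟨cos c.arg, sin c.arg⟩ := by
      apply Complex.ext
      · have := Complex.norm_mul_cos_arg c
        rw [hc1, one_mul] at this; exact this.symm
      · have := Complex.norm_mul_sin_arg c
        rw [hc1, one_mul] at this; exact this.symm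
    have : zz (rotMat ψ * rotMat ψ) = d * d := by
      rw [zz_mul, ww_rot]; simp [hd]
    rw [← this, ← rotMat_add, zz_rot]
    have e : ψ + ψ = - c.arg := by rw [hψ]; ring
    rw [e, cos_neg, sin_neg, neg_neg]
    exact hcc.symm
  have hdi : zz (rotMat ψ)⁻¹ = star d := by
    rw [← rotMat_neg, hd, zz_rot, zz_rot]
    apply Complex.ext <;> simp
  have hwi : ww (rotMat ψ)⁻¹ = 0 := by rw [← rotMat_neg, ww_rot]
  have hdd : d * star d = 1 := by
    rw [hd, zz_rot]
    have := sin_sq_add_cos_sq ψ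
    apply Complex.ext
    · simp; linarith
    · simp; ring
  refine ⟨QuotientGroup.mk (rotMat ψ), fun γ => ?_⟩
  have hfin : A γ = rotMat ψ * B γ * (rotMat ψ)⁻¹ := by
    apply zw_ext
    · simp only [zz_mul, ww_mul, ww_rot, hwi, hdi, hz, ← hd]
      simp only [zero_mul, add_zero, star_zero, mul_zero]
      linear_combination (-zz (A γ)) * hdd
    · simp only [zz_mul, ww_mul, ww_rot, hwi, hdi, hz, ← hd, star_star]
      simp only [zero_mul, add_zero, zero_add, star_zero, mul_zero]
      rw [hc γ, ← hdc]; ring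
  rw [hA, hB, hfin]; rfl

lemma rot_conj (g A : PSL2R) : rot (g * A * g⁻¹) = rot A := by
  have key : ∀ (g A : PSL2R), IsConj A (g * A * g⁻¹) := fun g A => isConj_iff.2 ⟨g, rfl⟩
  by_cases hex : ∃ θ ∈ Set.Ioo (0:ℝ) π, IsConj (QuotientGroup.mk (rotMat θ) : PSL2R) A
  · obtain ⟨x, hx, h⟩ := hex
    rw [rot_of_conj hx h, rot_of_conj hx (h.trans (key g A))]
  · have hex' : ¬ ∃ θ ∈ Set.Ioo (0:ℝ) π, IsConj (QuotientGroup.mk (rotMat θ) : PSL2R) (g * A * g⁻¹) := by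
      rintro ⟨x, hx, h⟩
      exact hex ⟨x, hx, h.trans (key g A).symm⟩
    unfold rot
    rw [dif_neg hex, dif_neg hex']

/-- **Proposition (Wolff).** If `Γ` is any group, `ρ₁, ρ₂ : Γ → PSL(2,ℝ)` are homomorphisms,
`ρ₁(Γ)` is non elementary and non discrete, and for every `γ ∈ Γ` the rotation numbers of
`ρ₁(γ)` and `ρ₂(γ)` coincide, then `ρ₁` and `ρ₂` are conjugate in `PSL(2,ℝ)`. -/
theorem rotation_number_rigidity {Γ : Type*} [Group Γ] (ρ₁ ρ₂ : Γ →* PSL2R)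
    (h_nonelem : ¬ IsElementary ρ₁.range)
    (h_nondisc : ¬ IsDiscreteSubgroup ρ₁.range)
    (h_rot : ∀ γ : Γ, rot (ρ₁ γ) = rot (ρ₂ γ)) :
    ∃ g : PSL2R, ∀ γ : Γ, ρ₁ γ = g * ρ₂ γ * g⁻¹ := by
  obtain ⟨M, hM, hM2, hMr⟩ := exists_irr _ h_nonelem h_nondisc
  obtain ⟨α, hα⟩ := (_root_.mem_lift _ _).1 hM
  obtain ⟨θ, hθ, hθ', hc⟩ := conj_of_ell M hM2
  have hM2' := abs_lt.1 hM2
  have hirr0 : Irrational (arccos (t M / 2) / π) := by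
    by_contra hcon
    apply hMr
    refine ⟨_, ?_, hcon⟩
    rw [cos_arccos (by linarith) (by linarith)]; ring
  have hirr : Irrational (θ / π) := by
    rcases hθ' with h | h
    · rw [h]; exact hirr0
    · rw [h]
      have : (π - arccos (t M / 2)) / π = (1 : ℤ) - arccos (t M / 2) / π := by
        push_cast; field_simp
      rw [this]
      exact hirr0.intCast_sub 1
  rw [← hα] at hc
  have hrot2 : IsConj (QuotientGroup.mk (rotMat θ) : PSL2R) (ρ₂ α) := by
    apply conj_of_rot hθ
    rw [← h_rot, rot_of_conj hθ hc]
  obtain ⟨g₁, hg₁⟩ := isConj_iff.1 hc.symm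
  obtain ⟨g₂, hg₂⟩ := isConj_iff.1 hrot2.symm
  let σ₁ : Γ →* PSL2R := (MulAut.conj g₁).toMonoidHom.comp ρ₁
  let σ₂ : Γ →* PSL2R := (MulAut.conj g₂).toMonoidHom.comp ρ₂
  have hσ₁ : ∀ γ, σ₁ γ = g₁ * ρ₁ γ * g₁⁻¹ := fun γ => rfl
  have hσ₂ : ∀ γ, σ₂ γ = g₂ * ρ₂ γ * g₂⁻¹ := fun γ => rfl
  obtain ⟨g, hg⟩ := core σ₁ σ₂ α θ hirr hg₁ hg₂ (by
    intro γ A B hA hB hlt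
    apply rot_trace _ hlt
    rw [← hA, ← hB, hσ₁, hσ₂, rot_conj, rot_conj, h_rot])
  refine ⟨g₁⁻¹ * g * g₂, fun γ => ?_⟩
  have := hg γ
  rw [hσ₁, hσ₂] at this
  have e : ρ₁ γ = g₁⁻¹ * (g₁ * ρ₁ γ * g₁⁻¹) * g₁ := by group
  rw [e, this]
  group
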